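/- arXiv:2302.14151 — 3 statements merged into one kernel-verified Lean document; each statement's English description precedes it below -/
import Mathlib

section
/- Let π̄ be an extreme point of C^l (the general-m cone over a network polytope). Define N = {v ∈ V : γ_j⁺(v) > 0 or γ_j⁻(v) > 0 for some j ∈ M, or θ⁺(v) > 0 or θ⁻(v) > 0} (the nodes whose flow-balance constraints carry positive weight) and J̃ = {a ∈ A : λ(a) > 0 or μ(a) > 0} (the connection arcs). If N ≠ ∅, then N induces a connected subgraph of the underlying undirected graph of G (the collection of all used nodes forms a tree in G), and every connection arc a ∈ J̃ with a ≠ i' is incident to at least one node of N. -/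
/-- Weight vector for the general-`m` EC&R projection cone over a network polytope:
components `γ_j⁺ γ_j⁻ : V → ℝ` and `η_j ρ_j : A → ℝ` for each `j ∈ M`, then
`θ⁺ θ⁻ : V → ℝ`, `λ μ : A → ℝ` and `β⁺ β⁻ : K → ℝ`, in this order. -/
abbrev ECRWeights (M V A K : Type) : Type :=
  (M → V → ℝ) × (M → V → ℝ) × (M → A → ℝ) × (M → A → ℝ) ×
  (V → ℝ) × (V → ℝ) × (A → ℝ) × (A → ℝ) × (K → ℝ) × (K → ℝ)

namespace ECRWeights

variable {M V A K : Type}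

def γp (w : ECRWeights M V A K) : M → V → ℝ := w.1
def γm (w : ECRWeights M V A K) : M → V → ℝ := w.2.1
def η (w : ECRWeights M V A K) : M → A → ℝ := w.2.2.1
def ρ (w : ECRWeights M V A K) : M → A → ℝ := w.2.2.2.1
def θp (w : ECRWeights M V A K) : V → ℝ := w.2.2.2.2.1
def θm (w : ECRWeights M V A K) : V → ℝ := w.2.2.2.2.2.1
def lam (w : ECRWeights M V A K) : A → ℝ := w.2.2.2.2.2.2.1
def mu (w : ECRWeights M V A K) : A → ℝ := w.2.2.2.2.2.2.2.1
def βp (w : ECRWeights M V A K) : K → ℝ := w.2.2.2.2.2.2.2.2.1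
def βm (w : ECRWeights M V A K) : K → ℝ := w.2.2.2.2.2.2.2.2.2

end ECRWeights

open ECRWeights in
/-- Membership in the normalized projection-cone restriction `C^l` for the general-`m`
case: nonnegativity, `β⁺ l = β⁻ l = 0`, and for every row `(a, j) ∈ A × M` the aggregation
equation with right-hand side `s·[(a, j) = (i', j')]` where `i' = ic l`, `j' = jc l`. -/
def memCl {M V A K : Type} [Fintype V] [Fintype K]
    [DecidableEq M] [DecidableEq A] [DecidableEq K]
    (E : V → A → ℝ) (jc : K → M) (ic : K → A) (l : K) (s : ℝ)
    (w : ECRWeights M V A K) : Prop :=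
  (∀ j v, 0 ≤ γp w j v) ∧ (∀ j v, 0 ≤ γm w j v) ∧
  (∀ j a, 0 ≤ η w j a) ∧ (∀ j a, 0 ≤ ρ w j a) ∧
  (∀ v, 0 ≤ θp w v) ∧ (∀ v, 0 ≤ θm w v) ∧
  (∀ a, 0 ≤ lam w a) ∧ (∀ a, 0 ≤ mu w a) ∧
  (∀ k, 0 ≤ βp w k) ∧ (∀ k, 0 ≤ βm w k) ∧
  βp w l = 0 ∧ βm w l = 0 ∧
  ∀ a j, (∑ k ∈ Finset.univ.filter (fun k => jc k = j ∧ ic k = a), (βp w k - βm w k))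
      + (∑ v, E v a * ((γp w j v - γm w j v) - (θp w v - θm w v)))
      + η w j a - ρ w j a - lam w a + mu w a
      = s * (if (a, j) = (ic l, jc l) then 1 else 0)

/-!
If `0 ≤ d ≤ w` and `d` satisfies the homogeneous equations of `C^l` (those with `s = 0`), then
`w + d` and `w - d` both lie in `C^l`, so `d = 0` when `w` is extreme. Such a `d` arises by cutting
`w` down to a node set `S` and an arc set `T ∌ i'` whenever every used node `v` and arc `a` with
`E v a ≠ 0` satisfy `v ∈ S ↔ a ∈ T`; hence no such pair carries positive weight.

For `S` a connected component of the used nodes and `T` the arcs meeting `S`, this forces `i'` to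
meet every component. Two used nodes meeting `i'` coincide or are adjacent, so there is only one
component. For `S = ∅` and `T = {a}`, it excludes a connection arc `a ≠ i'` meeting no used node.
-/

theorem eq_zero_of_mem_extremePoints_of_add_mem_of_sub_mem {𝕜 X : Type*} [Ring 𝕜] [LinearOrder 𝕜]
    [IsStrictOrderedRing 𝕜] [Invertible (2 : 𝕜)] [AddCommGroup X] [Module 𝕜 X]
    {C : Set X} {x d : X}
    (hx : x ∈ C.extremePoints 𝕜) (hadd : x + d ∈ C) (hsub : x - d ∈ C) : d = 0 := by
  simpa using hx.2 hadd hsub (mem_openSegment_add_sub (𝕜 := 𝕜) x d)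

theorem reflTransGen_of_induce_preconnected {V : Type*} {G : SimpleGraph V} {N : Set V}
    (hG : (G.induce N).Preconnected) {u v : V} (hu : u ∈ N) (hv : v ∈ N) :
    Relation.ReflTransGen (fun x y => x ∈ N ∧ y ∈ N ∧ G.Adj x y) u v :=
  ((SimpleGraph.reachable_iff_reflTransGen _ _).1 (hG ⟨u, hu⟩ ⟨v, hv⟩)).lift Subtype.val
    fun x y hxy => ⟨x.2, y.2, hxy⟩

section ColumnGraph

variable {R V A : Type*} [Zero R] {E : V → A → R}

/-- The adjacency graph of the rows of a matrix `E`: distinct `x` and `y` are adjacent if some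
column is nonzero at both. For the incidence matrix of a loopless digraph this is the underlying
undirected graph. -/
def columnGraph (E : V → A → R) : SimpleGraph V where
  Adj x y := x ≠ y ∧ ∃ a, E x a ≠ 0 ∧ E y a ≠ 0
  symm := ⟨fun _ _ ⟨hne, a, hx, hy⟩ => ⟨hne.symm, a, hy, hx⟩⟩
  loopless := ⟨fun _ h => h.1 rfl⟩

theorem columnGraph_induce_reachable {N : Set V} {x y : N} {a : A}
    (hx : E x a ≠ 0) (hy : E y a ≠ 0) : ((columnGraph E).induce N).Reachable x y := by
  by_cases hxy : x = y
  · exact hxy ▸ .rfl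
  · exact SimpleGraph.Adj.reachable ⟨Subtype.coe_ne_coe.2 hxy, a, hx, hy⟩

end ColumnGraph

namespace ECRWeights

variable {M V A K : Type}

/-- The set `N` of the paper: the nodes whose flow-balance constraints carry positive weight. -/
def usedNodes (w : ECRWeights M V A K) : Set V :=
  {v | (∃ j, 0 < γp w j v ∨ 0 < γm w j v) ∨ 0 < θp w v ∨ 0 < θm w v}

/-- The set `J̃` of connection arcs of the paper. -/
def connectionArcs (w : ECRWeights M V A K) : Set A :=
  {a | 0 < lam w a ∨ 0 < mu w a}

/-- The net weight with which the flow balance at `v` enters the aggregation equations `(·, j)`. -/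
def netNodeWeight (w : ECRWeights M V A K) (j : M) (v : V) : ℝ :=
  (γp w j v - γm w j v) - (θp w v - θm w v)

theorem netNodeWeight_eq_zero {w : ECRWeights M V A K} (hw : 0 ≤ w) {v : V}
    (hv : v ∉ w.usedNodes) (j : M) : netNodeWeight w j v = 0 := by
  simp only [usedNodes, Set.mem_ofPred_eq, not_or, not_exists, not_lt] at hv
  obtain ⟨hγ, hθp, hθm⟩ := hv
  obtain ⟨hγp₀, hγm₀, -, -, hθp₀, hθm₀, -⟩ := hw
  simp [netNodeWeight, (hγ j).1.antisymm (hγp₀ j v), (hγ j).2.antisymm (hγm₀ j v),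
    hθp.antisymm (hθp₀ v), hθm.antisymm (hθm₀ v)]

section Restrict

variable (ic : K → A) (S : Set V) (T : Set A)

/-- The part of `w` carried by the nodes in `S` and the arcs in `T`; the weight of a bilinear
constraint `k` belongs to its arc `ic k`. -/
noncomputable def restrict (w : ECRWeights M V A K) : ECRWeights M V A K :=
  (fun j => S.indicator (γp w j), fun j => S.indicator (γm w j),
    fun j => T.indicator (η w j), fun j => T.indicator (ρ w j),
    S.indicator (θp w), S.indicator (θm w), T.indicator (lam w), T.indicator (mu w),
    (ic ⁻¹' T).indicator (βp w), (ic ⁻¹' T).indicator (βm w))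

variable {w : ECRWeights M V A K}

theorem restrict_nonneg (hw : 0 ≤ w) : 0 ≤ restrict ic S T w := by
  obtain ⟨h₁, h₂, h₃, h₄, h₅, h₆, h₇, h₈, h₉, h₁₀⟩ := hw
  have ind {ι : Type} {R : Set ι} {f : ι → ℝ} (hf : 0 ≤ f) : 0 ≤ R.indicator f :=
    Set.indicator_nonneg fun i _ => hf i
  exact ⟨fun j => ind (h₁ j), fun j => ind (h₂ j), fun j => ind (h₃ j), fun j => ind (h₄ j),
    ind h₅, ind h₆, ind h₇, ind h₈, ind h₉, ind h₁₀⟩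

theorem restrict_le (hw : 0 ≤ w) : restrict ic S T w ≤ w := by
  obtain ⟨h₁, h₂, h₃, h₄, h₅, h₆, h₇, h₈, h₉, h₁₀⟩ := hw
  have ind {ι : Type} {R : Set ι} {f : ι → ℝ} (hf : 0 ≤ f) : R.indicator f ≤ f :=
    Set.indicator_le_self' fun i _ => hf i
  exact ⟨fun j => ind (h₁ j), fun j => ind (h₂ j), fun j => ind (h₃ j), fun j => ind (h₄ j),
    ind h₅, ind h₆, ind h₇, ind h₈, ind h₉, ind h₁₀⟩

variable (w)

theorem netNodeWeight_restrict (j : M) :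
    netNodeWeight (restrict ic S T w) j = S.indicator (netNodeWeight w j) := by
  ext v
  by_cases hv : v ∈ S <;> simp [netNodeWeight, restrict, γp, γm, θp, θm, hv]

theorem usedNodes_restrict : (restrict ic S T w).usedNodes = S ∩ w.usedNodes := by
  ext v
  by_cases hv : v ∈ S <;> simp [usedNodes, restrict, γp, γm, θp, θm, hv]

theorem connectionArcs_restrict : (restrict ic S T w).connectionArcs = T ∩ w.connectionArcs := by
  ext a
  by_cases ha : a ∈ T <;> simp [connectionArcs, restrict, lam, mu, ha]

end Restrict

theorem usedNodes_zero : (0 : ECRWeights M V A K).usedNodes = ∅ := by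
  simp [usedNodes, γp, γm, θp, θm]

theorem connectionArcs_zero : (0 : ECRWeights M V A K).connectionArcs = ∅ := by
  simp [connectionArcs, lam, mu]

variable [Fintype V] [Fintype K] [DecidableEq M] [DecidableEq A]
  (E : V → A → ℝ) (jc : K → M) (ic : K → A)

/-- The left-hand side of the aggregation equation `(a, j)`, as a linear map in the weights. -/
def aggregate (a : A) (j : M) : ECRWeights M V A K →ₗ[ℝ] ℝ where
  toFun w := (∑ k with jc k = j ∧ ic k = a, (βp w k - βm w k))
    + (∑ v, E v a * netNodeWeight w j v) + η w j a - ρ w j a - lam w a + mu w a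
  map_add' w w' := by
    simp only [netNodeWeight, γp, γm, η, ρ, θp, θm, lam, mu, βp, βm, Prod.fst_add, Prod.snd_add,
      Pi.add_apply, Finset.sum_sub_distrib, Finset.sum_add_distrib, mul_add, mul_sub]
    ring
  map_smul' c w := by
    simp only [netNodeWeight, γp, γm, η, ρ, θp, θm, lam, mu, βp, βm, Prod.smul_fst, Prod.smul_snd,
      Pi.smul_apply, smul_eq_mul, Finset.sum_sub_distrib, Finset.mul_sum, RingHom.id_apply,
      mul_add, mul_sub, mul_left_comm c]

theorem aggregate_restrict {w : ECRWeights M V A K} (hw : 0 ≤ w) {S : Set V} {T : Set A}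
    (hST : ∀ v ∈ w.usedNodes, ∀ a, E v a ≠ 0 → (v ∈ S ↔ a ∈ T)) (a : A) (j : M) :
    aggregate E jc ic a j (restrict ic S T w) = T.indicator (aggregate E jc ic · j w) a := by
  classical
  have hnode (v : V) : E v a * netNodeWeight (restrict ic S T w) j v
      = if a ∈ T then E v a * netNodeWeight w j v else 0 := by
    rw [netNodeWeight_restrict]
    by_cases hE : E v a = 0
    · simp [hE]
    by_cases hv : v ∈ w.usedNodes
    · simp [Set.indicator_apply, hST v hv a hE]
    · simp [netNodeWeight_eq_zero hw hv j]
  have hβ : ∑ k with jc k = j ∧ ic k = a, (βp (restrict ic S T w) k - βm (restrict ic S T w) k)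
      = ∑ k with jc k = j ∧ ic k = a, if a ∈ T then βp w k - βm w k else 0 := by
    refine Finset.sum_congr rfl fun k hk => ?_
    have hka : ic k = a := (Finset.mem_filter.1 hk).2.2
    by_cases ha : a ∈ T <;> simp [restrict, βp, βm, hka, ha]
  simp only [aggregate, LinearMap.coe_mk, AddHom.coe_mk, hnode, hβ]
  by_cases ha : a ∈ T <;> simp [restrict, η, ρ, lam, mu, ha]

variable {E jc ic} [DecidableEq K] {l : K} {s s' : ℝ} {w w' : ECRWeights M V A K}

theorem memCl_iff : memCl E jc ic l s w ↔ 0 ≤ w ∧ βp w l = 0 ∧ βm w l = 0 ∧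
    ∀ a j, aggregate E jc ic a j w = s * (if (a, j) = (ic l, jc l) then 1 else 0) :=
  ⟨fun ⟨h₁, h₂, h₃, h₄, h₅, h₆, h₇, h₈, h₉, h₁₀, h⟩ =>
    ⟨⟨h₁, h₂, h₃, h₄, h₅, h₆, h₇, h₈, h₉, h₁₀⟩, h⟩,
  fun ⟨⟨h₁, h₂, h₃, h₄, h₅, h₆, h₇, h₈, h₉, h₁₀⟩, h⟩ =>
    ⟨h₁, h₂, h₃, h₄, h₅, h₆, h₇, h₈, h₉, h₁₀, h⟩⟩

theorem memCl_add (hw : memCl E jc ic l s w) (hw' : memCl E jc ic l s' w') :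
    memCl E jc ic l (s + s') (w + w') := by
  obtain ⟨hw₀, hβp, hβm, hagg⟩ := memCl_iff.1 hw
  obtain ⟨hw₀', hβp', hβm', hagg'⟩ := memCl_iff.1 hw'
  refine memCl_iff.2 ⟨add_nonneg hw₀ hw₀', ?_, ?_, fun a j => ?_⟩
  · exact (congrArg₂ (· + ·) hβp hβp').trans (add_zero 0)
  · exact (congrArg₂ (· + ·) hβm hβm').trans (add_zero 0)
  · rw [map_add, hagg, hagg', add_mul]

theorem memCl_sub (hw : memCl E jc ic l s w) (hw' : memCl E jc ic l s' w') (hle : w' ≤ w) :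
    memCl E jc ic l (s - s') (w - w') := by
  obtain ⟨-, hβp, hβm, hagg⟩ := memCl_iff.1 hw
  obtain ⟨-, hβp', hβm', hagg'⟩ := memCl_iff.1 hw'
  refine memCl_iff.2 ⟨sub_nonneg.2 hle, ?_, ?_, fun a j => ?_⟩
  · exact (congrArg₂ (· - ·) hβp hβp').trans (sub_zero 0)
  · exact (congrArg₂ (· - ·) hβm hβm').trans (sub_zero 0)
  · rw [map_sub, hagg, hagg', sub_mul]

theorem memCl_zero_restrict (hw : memCl E jc ic l s w) {S : Set V} {T : Set A} (hl : ic l ∉ T)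
    (hST : ∀ v ∈ w.usedNodes, ∀ a, E v a ≠ 0 → (v ∈ S ↔ a ∈ T)) :
    memCl E jc ic l 0 (restrict ic S T w) := by
  obtain ⟨hw₀, -, -, hagg⟩ := memCl_iff.1 hw
  have hl' : l ∉ ic ⁻¹' T := hl
  refine memCl_iff.2 ⟨restrict_nonneg ic S T hw₀, Set.indicator_of_notMem hl' _,
    Set.indicator_of_notMem hl' _, fun a j => ?_⟩
  rw [aggregate_restrict E jc ic hw₀ hST, zero_mul, Set.indicator_apply_eq_zero]
  intro ha
  have hal : a ≠ ic l := ne_of_mem_of_not_mem ha hl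
  simp [hagg, hal]

theorem restrict_eq_zero (hw : w ∈ Set.extremePoints ℝ {w' | memCl E jc ic l s w'})
    {S : Set V} {T : Set A} (hl : ic l ∉ T)
    (hST : ∀ v ∈ w.usedNodes, ∀ a, E v a ≠ 0 → (v ∈ S ↔ a ∈ T)) : restrict ic S T w = 0 := by
  have hrestrict := memCl_zero_restrict hw.1 hl hST
  refine eq_zero_of_mem_extremePoints_of_add_mem_of_sub_mem hw ?_ ?_
  · simpa using memCl_add hw.1 hrestrict
  · simpa using memCl_sub hw.1 hrestrict (restrict_le ic S T (memCl_iff.1 hw.1).1)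

theorem exists_reachable_base_arc (hw : w ∈ Set.extremePoints ℝ {w' | memCl E jc ic l s w'})
    (u : w.usedNodes) :
    ∃ x, ((columnGraph E).induce w.usedNodes).Reachable u x ∧ E x (ic l) ≠ 0 := by
  by_contra! hno
  set G := (columnGraph E).induce w.usedNodes
  let S : Set V := Subtype.val '' {x | G.Reachable u x}
  have hST : ∀ v ∈ w.usedNodes, ∀ a, E v a ≠ 0 → (v ∈ S ↔ a ∈ {a | ∃ x ∈ S, E x a ≠ 0}) := by
    refine fun v hv a hva => ⟨fun hvS => ⟨v, hvS, hva⟩, ?_⟩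
    rintro ⟨_, ⟨x, hux, rfl⟩, hxa⟩
    exact ⟨⟨v, hv⟩, hux.trans (columnGraph_induce_reachable hxa hva), rfl⟩
  have hl : ic l ∉ {a | ∃ x ∈ S, E x a ≠ 0} := by
    rintro ⟨_, ⟨x, hux, rfl⟩, hxl⟩
    exact hxl (hno x hux)
  have hempty : S ∩ w.usedNodes = ∅ := by
    rw [← usedNodes_restrict ic S, restrict_eq_zero hw hl hST, usedNodes_zero]
  exact Set.notMem_empty (u : V) (hempty ▸ ⟨⟨u, .rfl, rfl⟩, u.2⟩)

theorem usedNodes_preconnected (hw : w ∈ Set.extremePoints ℝ {w' | memCl E jc ic l s w'}) :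
    ((columnGraph E).induce w.usedNodes).Preconnected := by
  intro u v
  obtain ⟨x, hux, hx⟩ := exists_reachable_base_arc hw u
  obtain ⟨y, hvy, hy⟩ := exists_reachable_base_arc hw v
  exact hux.trans ((columnGraph_induce_reachable hx hy).trans hvy.symm)

theorem exists_usedNode_of_mem_connectionArcs
    (hw : w ∈ Set.extremePoints ℝ {w' | memCl E jc ic l s w'})
    {a : A} (ha : a ∈ w.connectionArcs) (hal : a ≠ ic l) : ∃ v ∈ w.usedNodes, E v a ≠ 0 := by
  by_contra! hno
  have hST : ∀ v ∈ w.usedNodes, ∀ b, E v b ≠ 0 → (v ∈ (∅ : Set V) ↔ b ∈ ({a} : Set A)) := by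
    rintro v hv b hvb
    simpa using fun hba : b = a => hvb (hba ▸ hno v hv)
  have hempty : {a} ∩ w.connectionArcs = ∅ := by
    rw [← connectionArcs_restrict ic ∅, restrict_eq_zero hw hal.symm hST, connectionArcs_zero]
  exact Set.notMem_empty a (hempty ▸ ⟨rfl, ha⟩)

end ECRWeights

open ECRWeights in
theorem extremePoint_mem_Cl_support_nodes_form_tree_general
    {M V A K : Type} [Fintype V] [Fintype K] [DecidableEq M] [DecidableEq A] [DecidableEq K]
    {E : V → A → ℝ} {jc : K → M} {ic : K → A} {l : K} {s : ℝ} {w : ECRWeights M V A K}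
    (hw : w ∈ Set.extremePoints ℝ {w' | memCl E jc ic l s w'}) :
    ((columnGraph E).induce w.usedNodes).Preconnected ∧
      ∀ a ∈ w.connectionArcs, a ≠ ic l → ∃ v ∈ w.usedNodes, E v a ≠ 0 :=
  ⟨usedNodes_preconnected hw, fun _ => exists_usedNode_of_mem_connectionArcs hw⟩

open ECRWeights in
/-- At an extreme point of `C^l` (the general-`m` cone over a network polytope), the set
`N` of nodes whose flow-balance constraints carry positive weight, if nonempty, induces a
connected subgraph of the underlying undirected graph of `G` (the collection of all used
nodes forms a tree in `G`), and every connection arc `a ∈ J̃` with `a ≠ i'` is incident to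
at least one node of `N`. -/
theorem extremePoint_mem_Cl_support_nodes_form_tree
    {M V A K : Type} [Fintype M] [Fintype V] [Fintype A] [Fintype K]
    [DecidableEq M] [DecidableEq V] [DecidableEq A] [DecidableEq K]
    (t h : A → V) (hloop : ∀ a, t a ≠ h a)
    (E : V → A → ℝ)
    (hE : ∀ v a, E v a = (if t a = v then (1 : ℝ) else 0) - (if h a = v then 1 else 0))
    (jc : K → M) (ic : K → A) (l : K) (s : ℝ) (hs : s = 1 ∨ s = -1)
    (w : ECRWeights M V A K)
    (hw : w ∈ Set.extremePoints ℝ {w' : ECRWeights M V A K | memCl E jc ic l s w'})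
    (N : Set V)
    (hN : N = {v | (∃ j, 0 < γp w j v ∨ 0 < γm w j v) ∨ 0 < θp w v ∨ 0 < θm w v})
    (J : Set A) (hJ : J = {a | 0 < lam w a ∨ 0 < mu w a})
    (hne : N.Nonempty) :
    (∀ u ∈ N, ∀ v ∈ N, Relation.ReflTransGen
      (fun x y => x ∈ N ∧ y ∈ N ∧ x ≠ y ∧
        ∃ a, (t a = x ∨ h a = x) ∧ (t a = y ∨ h a = y)) u v) ∧
    (∀ a ∈ J, a ≠ ic l → (t a ∈ N ∨ h a ∈ N)) := by
  subst hN hJ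
  have hincident {v : V} {a : A} (hva : E v a ≠ 0) : t a = v ∨ h a = v := by
    by_contra! hnot
    simp [hE, hnot] at hva
  obtain ⟨hconn, harc⟩ := extremePoint_mem_Cl_support_nodes_form_tree_general hw
  refine ⟨fun u hu v hv => ?_, fun a ha hal => ?_⟩
  · exact (reflTransGen_of_induce_preconnected hconn hu hv).lift id
      fun x y ⟨hx, hy, hxy, a, hxa, hya⟩ => ⟨hx, hy, hxy, a, hincident hxa, hincident hya⟩
  · obtain ⟨v, hv, hva⟩ := harc a ha hal
    rcases hincident hva with rfl | rfl
    exacts [Or.inl hv, Or.inr hv]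
end

section
/- Let π̄ be an extreme point of C^l (the general-m cone over a network polytope) that satisfies the pairwise-cancellation property. Then every component of π̄ lies in {0,1}; i.e., the aggregation weights of all constraints used in an EC&R assignment obtained through pairwise cancellation are equal to 1. -/
/-- Column (component) index type for the linear system defining `C^l`:
`γ_j⁺(v), γ_j⁻(v), η_j(a), ρ_j(a), θ⁺(v), θ⁻(v), λ(a), μ(a), β⁺(k), β⁻(k)`. -/
abbrev ECRCol (M V A K : Type) : Type :=
  (M × V) ⊕ (M × V) ⊕ (M × A) ⊕ (M × A) ⊕ V ⊕ V ⊕ A ⊕ A ⊕ K ⊕ K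

open ECRWeights in
/-- The value of the component of the weight vector `w` indexed by a column. -/
def colVal {M V A K : Type} (w : ECRWeights M V A K) : ECRCol M V A K → ℝ :=
  Sum.elim (fun jv => γp w jv.1 jv.2)
    (Sum.elim (fun jv => γm w jv.1 jv.2)
      (Sum.elim (fun ja => η w ja.1 ja.2)
        (Sum.elim (fun ja => ρ w ja.1 ja.2)
          (Sum.elim (fun v => θp w v)
            (Sum.elim (fun v => θm w v)
              (Sum.elim (fun a => lam w a)
                (Sum.elim (fun a => mu w a)
                  (Sum.elim (fun k => βp w k) (fun k => βm w k)))))))))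

/-- `covers E jc ic c r` holds when the column `c` of the linear system defining `C^l` has
a nonzero coefficient in the row `r = (a, j)`. -/
def covers {M V A K : Type} (E : V → A → ℝ) (jc : K → M) (ic : K → A) :
    ECRCol M V A K → A × M → Prop :=
  Sum.elim (fun jv r => jv.1 = r.2 ∧ E jv.2 r.1 ≠ 0)
    (Sum.elim (fun jv r => jv.1 = r.2 ∧ E jv.2 r.1 ≠ 0)
      (Sum.elim (fun ja r => ja.1 = r.2 ∧ ja.2 = r.1)
        (Sum.elim (fun ja r => ja.1 = r.2 ∧ ja.2 = r.1)
          (Sum.elim (fun v r => E v r.1 ≠ 0)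
            (Sum.elim (fun v r => E v r.1 ≠ 0)
              (Sum.elim (fun a r => a = r.1)
                (Sum.elim (fun a r => a = r.1)
                  (Sum.elim (fun k r => jc k = r.2 ∧ ic k = r.1)
                    (fun k r => jc k = r.2 ∧ ic k = r.1)))))))))

/-- `w` satisfies the pairwise-cancellation property when every row of the linear system
defining `C^l` is covered by at most two positive components of `w` and the base row
`(i', j') = (ic l, jc l)` is covered by at most one positive component of `w`. -/
def PairwiseCancellation {M V A K : Type} (E : V → A → ℝ) (jc : K → M) (ic : K → A)
    (l : K) (w : ECRWeights M V A K) : Prop :=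
  (∀ r : A × M,
    Set.ncard {c : ECRCol M V A K | 0 < colVal w c ∧ covers E jc ic c r} ≤ 2) ∧
  Set.ncard {c : ECRCol M V A K | 0 < colVal w c ∧ covers E jc ic c (ic l, jc l)} ≤ 1

/-!
The system defining `C^l` has coefficients in `{0, 1, -1}` in each row. Under pairwise cancellation,
two positive components that meet in a row with right-hand side `0` are equal and occur with
opposite signs, and the only positive component that meets the base row equals `|s|`. So
applying to every component any `F` with `F 0 = F |s| = 0` yields a solution of the homogeneous
system. If some component of `x` had a value `y ∉ {0, |s|}`, then for the part `d` of `x` on the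
level set of `y` both `x + d` and `x - d` would be feasible, and `x` would not be extreme.
-/

section LinearOrderedField

variable {𝕜 E C R : Type*} [Field 𝕜] [LinearOrder 𝕜]

/-- The nonnegative solutions of a linear system with rows `A` and right-hand sides `b` whose
components in `Z` vanish. Rows are finitely supported, so that there may be infinitely many
columns. -/
def nonnegSolutions (A : R → C →₀ 𝕜) (b : R → 𝕜) (Z : Set C) : Set (C → 𝕜) :=
  {x | 0 ≤ x ∧ (∀ c ∈ Z, x c = 0) ∧ ∀ r, Finsupp.linearCombination 𝕜 x (A r) = b r}

/-- The positive components of `x` that have a nonzero coefficient in the row `a`. -/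
def positiveSupport (a : C →₀ 𝕜) (x : C → 𝕜) : Finset C :=
  {c ∈ a.support | 0 < x c}

theorem mem_positiveSupport {a : C →₀ 𝕜} {x : C → 𝕜} {c : C} :
    c ∈ positiveSupport a x ↔ a c ≠ 0 ∧ 0 < x c := by
  simp [positiveSupport]

theorem linearCombination_comp_eq_sum_positiveSupport (a : C →₀ 𝕜) {x : C → 𝕜} (hx : 0 ≤ x)
    {F : 𝕜 → 𝕜} (hF : F 0 = 0) :
    Finsupp.linearCombination 𝕜 (F ∘ x) a = ∑ c ∈ positiveSupport a x, a c * F (x c) := by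
  rw [Finsupp.linearCombination_apply]
  refine (Finset.sum_subset (Finset.filter_subset _ _) fun c hca hcx ↦ ?_).symm
  have hxc : x c = 0 :=
    ((hx c).eq_or_lt.resolve_right fun hpos ↦ hcx (Finset.mem_filter.2 ⟨hca, hpos⟩)).symm
  simp [hxc, hF]

/-- Pairwise cancellation of `x` in the row `a` with right-hand side `b`, for a system whose
right-hand sides have absolute value `0` or `σ`: at most two positive components of `x` meet in a
homogeneous row, and at most one in a row with `|b| = σ`. -/
def CancelsInRow (a : C →₀ 𝕜) (b σ : 𝕜) (x : C → 𝕜) : Prop :=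
  b = 0 ∧ (positiveSupport a x).card ≤ 2 ∨ |b| = σ ∧ (positiveSupport a x).card ≤ 1

variable [IsStrictOrderedRing 𝕜]

theorem eq_zero_of_mem_extremePoints_of_add_mem_of_sub_mem_s9 [AddCommGroup E] [Module 𝕜 E]
    {P : Set E} {x d : E} (hx : x ∈ P.extremePoints 𝕜) (hadd : x + d ∈ P) (hsub : x - d ∈ P) :
    d = 0 := by
  let : Invertible (2 : 𝕜) := invertibleOfNonzero two_ne_zero
  exact sub_eq_self.1 <|
    (mem_extremePoints_iff_left.1 hx).2 _ hsub _ hadd (mem_openSegment_sub_add x d)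

theorem sum_mul_comp_eq_zero_of_card_le_two {T : Finset C} {a x : C → 𝕜} (hT : T.card ≤ 2)
    (ha : ∀ c ∈ T, |a c| = 1) (hx : ∀ c ∈ T, 0 < x c) (hsum : ∑ c ∈ T, a c * x c = 0)
    (F : 𝕜 → 𝕜) : ∑ c ∈ T, a c * F (x c) = 0 := by
  classical
  obtain hcard | hcard | hcard : T.card = 0 ∨ T.card = 1 ∨ T.card = 2 := by lia
  · simp [Finset.card_eq_zero.1 hcard]
  · obtain ⟨c, rfl⟩ := Finset.card_eq_one.1 hcard
    simp only [Finset.mem_singleton, forall_eq, Finset.sum_singleton] at ha hx hsum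
    simp [(mul_eq_zero.1 hsum).resolve_right hx.ne'] at ha
  · obtain ⟨c, d, hcd, rfl⟩ := Finset.card_eq_two.1 hcard
    simp only [Finset.mem_insert, Finset.mem_singleton, forall_eq_or_imp, forall_eq] at ha hx
    rw [Finset.sum_pair hcd] at hsum ⊢
    have hxcd : x c = x d := by
      have habs := congrArg abs (eq_neg_of_add_eq_zero_left hsum)
      simpa only [abs_neg, abs_mul, ha.1, ha.2, one_mul, abs_of_pos hx.1, abs_of_pos hx.2]
        using habs
    have hacd : a c + a d = 0 := by
      rw [hxcd, ← add_mul] at hsum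
      exact (mul_eq_zero.1 hsum).resolve_right hx.2.ne'
    rw [hxcd, ← add_mul, hacd, zero_mul]

theorem sum_mul_comp_eq_zero_of_card_le_one {T : Finset C} {a x : C → 𝕜} (hT : T.card ≤ 1)
    (ha : ∀ c ∈ T, |a c| = 1) (hx : ∀ c ∈ T, 0 < x c)
    {F : 𝕜 → 𝕜} (hF : F |∑ c ∈ T, a c * x c| = 0) : ∑ c ∈ T, a c * F (x c) = 0 := by
  obtain hcard | hcard : T.card = 0 ∨ T.card = 1 := by lia
  · simp [Finset.card_eq_zero.1 hcard]
  · obtain ⟨c, rfl⟩ := Finset.card_eq_one.1 hcard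
    simp only [Finset.mem_singleton, forall_eq, Finset.sum_singleton] at ha hx hF ⊢
    rw [abs_mul, ha, one_mul, abs_of_pos hx] at hF
    rw [hF, mul_zero]

theorem CancelsInRow.linearCombination_comp_eq_zero {a : C →₀ 𝕜} {x : C → 𝕜} {σ : 𝕜}
    (hcancel : CancelsInRow a (Finsupp.linearCombination 𝕜 x a) σ x)
    (ha : ∀ c, a c ≠ 0 → |a c| = 1) (hx : 0 ≤ x) {F : 𝕜 → 𝕜} (hF : F 0 = 0) (hFσ : F σ = 0) :
    Finsupp.linearCombination 𝕜 (F ∘ x) a = 0 := by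
  have hrow : Finsupp.linearCombination 𝕜 x a = ∑ c ∈ positiveSupport a x, a c * x c :=
    linearCombination_comp_eq_sum_positiveSupport a hx (F := id) rfl
  have haT : ∀ c ∈ positiveSupport a x, |a c| = 1 := fun c hc ↦ ha c (mem_positiveSupport.1 hc).1
  have hxT : ∀ c ∈ positiveSupport a x, 0 < x c := fun c hc ↦ (mem_positiveSupport.1 hc).2
  rw [linearCombination_comp_eq_sum_positiveSupport a hx hF]
  rw [CancelsInRow, hrow] at hcancel
  obtain ⟨hzero, hcard⟩ | ⟨habs, hcard⟩ := hcancel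
  · exact sum_mul_comp_eq_zero_of_card_le_two hcard haT hxT hzero F
  · exact sum_mul_comp_eq_zero_of_card_le_one hcard haT hxT (habs ▸ hFσ)

theorem add_comp_mem_nonnegSolutions {A : R → C →₀ 𝕜} {b : R → 𝕜} {Z : Set C} {x : C → 𝕜} {σ : 𝕜}
    (hA : ∀ r c, A r c ≠ 0 → |A r c| = 1) (hx : x ∈ nonnegSolutions A b Z)
    (hcancel : ∀ r, CancelsInRow (A r) (b r) σ x) {F : 𝕜 → 𝕜} (hF : F 0 = 0) (hFσ : F σ = 0)
    (hadd : 0 ≤ x + F ∘ x) : x + F ∘ x ∈ nonnegSolutions A b Z := by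
  obtain ⟨hnonneg, hxZ, hxA⟩ := hx
  refine ⟨hadd, fun c hc ↦ by simp [hxZ c hc, hF], fun r ↦ ?_⟩
  have hFA : Finsupp.linearCombination 𝕜 (F ∘ x) (A r) = 0 :=
    (hxA r ▸ hcancel r).linearCombination_comp_eq_zero (hA r) hnonneg hF hFσ
  calc Finsupp.linearCombination 𝕜 (x + F ∘ x) (A r)
      = Finsupp.linearCombination 𝕜 x (A r) + Finsupp.linearCombination 𝕜 (F ∘ x) (A r) := by
        simp only [Finsupp.linearCombination_apply, Pi.add_apply, smul_add, Finsupp.sum_add]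
    _ = b r := by rw [hxA, hFA, add_zero]

theorem eq_zero_or_eq_of_mem_extremePoints_nonnegSolutions {A : R → C →₀ 𝕜} {b : R → 𝕜}
    {Z : Set C} {x : C → 𝕜} {σ : 𝕜} (hA : ∀ r c, A r c ≠ 0 → |A r c| = 1)
    (hx : x ∈ (nonnegSolutions A b Z).extremePoints 𝕜)
    (hcancel : ∀ r, CancelsInRow (A r) (b r) σ x) (c : C) : x c = 0 ∨ x c = σ := by
  refine or_iff_not_imp_right.2 fun hcσ ↦ ?_
  have hnonneg : 0 ≤ x := hx.1.1
  let F : 𝕜 → 𝕜 := fun y ↦ if y = x c then y else 0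
  have hF : F 0 = 0 := ite_self 0
  have hFσ : F σ = 0 := if_neg (Ne.symm hcσ)
  have hF_nonneg (c' : C) : 0 ≤ F (x c') := ite_nonneg (hnonneg c') le_rfl
  have hF_le (c' : C) : F (x c') ≤ x c' := by
    dsimp only [F]
    split_ifs
    exacts [le_rfl, hnonneg c']
  have hadd : x + F ∘ x ∈ nonnegSolutions A b Z :=
    add_comp_mem_nonnegSolutions hA hx.1 hcancel hF hFσ fun c' ↦
      add_nonneg (hnonneg c') (hF_nonneg c')
  have hsub : x - F ∘ x ∈ nonnegSolutions A b Z := by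
    rw [sub_eq_add_neg]
    exact add_comp_mem_nonnegSolutions (F := -F) hA hx.1 hcancel (by simp [hF]) (by simp [hFσ])
      fun c' ↦ by simpa using hF_le c'
  have hzero : F (x c) = 0 :=
    congrFun (eq_zero_of_mem_extremePoints_of_add_mem_of_sub_mem_s9 hx hadd hsub) c
  simpa only [F, if_true] using hzero

end LinearOrderedField

namespace ECRCol

variable {M V A K : Type}

/-- The column of `γ_j⁺(v)`. -/
abbrev γp (j : M) (v : V) : ECRCol M V A K := .inl (j, v)

/-- The column of `γ_j⁻(v)`. -/
abbrev γm (j : M) (v : V) : ECRCol M V A K := .inr (.inl (j, v))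

/-- The column of `η_j(a)`. -/
abbrev η (j : M) (a : A) : ECRCol M V A K := .inr (.inr (.inl (j, a)))

/-- The column of `ρ_j(a)`. -/
abbrev ρ (j : M) (a : A) : ECRCol M V A K := .inr (.inr (.inr (.inl (j, a))))

/-- The column of `θ⁺(v)`. -/
abbrev θp (v : V) : ECRCol M V A K := .inr (.inr (.inr (.inr (.inl v))))

/-- The column of `θ⁻(v)`. -/
abbrev θm (v : V) : ECRCol M V A K := .inr (.inr (.inr (.inr (.inr (.inl v)))))

/-- The column of `λ(a)`. -/
abbrev lam (a : A) : ECRCol M V A K := .inr (.inr (.inr (.inr (.inr (.inr (.inl a))))))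

/-- The column of `μ(a)`. -/
abbrev mu (a : A) : ECRCol M V A K := .inr (.inr (.inr (.inr (.inr (.inr (.inr (.inl a)))))))

/-- The column of `β⁺(k)`. -/
abbrev βp (k : K) : ECRCol M V A K :=
  .inr (.inr (.inr (.inr (.inr (.inr (.inr (.inr (.inl k))))))))

/-- The column of `β⁻(k)`. -/
abbrev βm (k : K) : ECRCol M V A K :=
  .inr (.inr (.inr (.inr (.inr (.inr (.inr (.inr (.inr k))))))))

end ECRCol

section ECR

variable {M V A K : Type}

/-- Weight vectors identified, through `colVal`, with real functions on the set of columns; extreme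
points of `C^l` correspond to those of a set of nonnegative solutions of a linear system. -/
def colValEquiv : ECRWeights M V A K ≃ₗ[ℝ] (ECRCol M V A K → ℝ) where
  toFun := colVal
  map_add' w w' := by
    funext c
    rcases c with c | c | c | c | c | c | c | c | c | c <;> rfl
  map_smul' a w := by
    funext c
    rcases c with c | c | c | c | c | c | c | c | c | c <;> rfl
  invFun x :=
    (fun j v ↦ x (.γp j v), fun j v ↦ x (.γm j v), fun j a ↦ x (.η j a), fun j a ↦ x (.ρ j a),
      fun v ↦ x (.θp v), fun v ↦ x (.θm v), fun a ↦ x (.lam a), fun a ↦ x (.mu a),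
      fun k ↦ x (.βp k), fun k ↦ x (.βm k))
  left_inv _ := rfl
  right_inv x := by
    funext c
    rcases c with c | c | c | c | c | c | c | c | c | c <;> rfl

variable [Fintype V] [Fintype K] [DecidableEq M] [DecidableEq A] {E : V → A → ℝ} {jc : K → M}
  {ic : K → A} {l : K} {s : ℝ} {w : ECRWeights M V A K}

open Finsupp in
/-- The row `r` of the system defining `C^l`, as a finitely supported vector of coefficients indexed
by the columns. -/
noncomputable def ecrRow (E : V → A → ℝ) (jc : K → M) (ic : K → A) (r : A × M) :
    ECRCol M V A K →₀ ℝ :=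
  ∑ k with jc k = r.2 ∧ ic k = r.1, (single (.βp k) 1 - single (.βm k) 1)
    + ∑ v, E v r.1 • ((single (.γp r.2 v) 1 - single (.γm r.2 v) 1)
      - (single (.θp v) 1 - single (.θm v) 1))
    + single (.η r.2 r.1) 1 - single (.ρ r.2 r.1) 1 - single (.lam r.1) 1 + single (.mu r.1) 1

theorem linearCombination_ecrRow (x : ECRCol M V A K → ℝ) (a : A) (j : M) :
    Finsupp.linearCombination ℝ x (ecrRow E jc ic (a, j)) =
      ∑ k with jc k = j ∧ ic k = a, (x (.βp k) - x (.βm k))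
        + ∑ v, E v a * ((x (.γp j v) - x (.γm j v)) - (x (.θp v) - x (.θm v)))
        + x (.η j a) - x (.ρ j a) - x (.lam a) + x (.mu a) := by
  simp only [ecrRow, map_add, map_sub, map_sum, map_smul, Finsupp.linearCombination_single,
    smul_eq_mul, one_mul]

theorem memCl_iff_colVal_mem_nonnegSolutions [DecidableEq K] :
    memCl E jc ic l s w ↔
      colVal w ∈ nonnegSolutions (ecrRow E jc ic) (Pi.single (ic l, jc l) s) {.βp l, .βm l} := by
  simp only [memCl, nonnegSolutions, Set.mem_ofPred_eq, Pi.le_def, Sum.forall, Prod.forall,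
    Set.mem_insert_iff, Set.mem_singleton_iff, forall_eq_or_imp, forall_eq, and_assoc,
    linearCombination_ecrRow, Pi.single_apply, mul_ite, mul_one, mul_zero]
  rfl

theorem colVal_mem_extremePoints [DecidableEq K]
    (hw : w ∈ Set.extremePoints ℝ {w' | memCl E jc ic l s w'}) :
    colVal w ∈ (nonnegSolutions (ecrRow E jc ic) (Pi.single (ic l, jc l) s)
      {.βp l, .βm l}).extremePoints ℝ := by
  have hpreimage : {w' | memCl E jc ic l s w'} = colValEquiv ⁻¹'
      nonnegSolutions (ecrRow E jc ic) (Pi.single (ic l, jc l) s) {.βp l, .βm l} :=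
    Set.ext fun _ ↦ memCl_iff_colVal_mem_nonnegSolutions
  rw [hpreimage] at hw
  have himage := Set.mem_image_of_mem colValEquiv hw
  rwa [image_extremePoints, Set.image_preimage_eq _ colValEquiv.surjective] at himage

theorem covers_iff_ecrRow_ne_zero (c : ECRCol M V A K) (r : A × M) :
    covers E jc ic c r ↔ ecrRow E jc ic r c ≠ 0 := by
  classical
  obtain ⟨a, j⟩ := r
  rcases c with ⟨j', v⟩ | ⟨j', v⟩ | ⟨j', a'⟩ | ⟨j', a'⟩ | v | v | a' | a' | k | k <;>
    simp [covers, ecrRow, Finsupp.single_apply, ite_and, Finset.sum_ite_irrel,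
      @eq_comm _ j, @eq_comm _ a]

theorem abs_ecrRow_eq_one (hE : ∀ v a, E v a ≠ 0 → |E v a| = 1) {c : ECRCol M V A K} {r : A × M}
    (hc : ecrRow E jc ic r c ≠ 0) : |ecrRow E jc ic r c| = 1 := by
  classical
  obtain ⟨a, j⟩ := r
  rcases c with ⟨j', v⟩ | ⟨j', v⟩ | ⟨j', a'⟩ | ⟨j', a'⟩ | v | v | a' | a' | k | k <;>
    simp_all [ecrRow, Finsupp.single_apply, ite_and, Finset.sum_ite_irrel]

theorem ncard_pos_and_covers (r : A × M) :
    Set.ncard {c | 0 < colVal w c ∧ covers E jc ic c r} =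
      (positiveSupport (ecrRow E jc ic r) (colVal w)).card := by
  rw [← Set.ncard_coe_finset]
  congr 1
  ext c
  simp only [Set.mem_ofPred_eq, Finset.mem_coe, mem_positiveSupport, covers_iff_ecrRow_ne_zero,
    and_comm]

theorem PairwiseCancellation.cancelsInRow (hpc : PairwiseCancellation E jc ic l w) (r : A × M) :
    CancelsInRow (ecrRow E jc ic r) ((Pi.single (ic l, jc l) s : A × M → ℝ) r) |s| (colVal w) := by
  obtain ⟨htwo, hone⟩ := hpc
  simp only [ncard_pos_and_covers] at htwo hone
  by_cases hr : r = (ic l, jc l)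
  · exact .inr ⟨by rw [hr, Pi.single_eq_same], hr ▸ hone⟩
  · exact .inl ⟨by rw [Pi.single_eq_of_ne hr], htwo r⟩

end ECR

theorem extremePoint_pairwiseCancellation_zero_one_general
    {M V A K : Type} [Fintype V] [Fintype K] [DecidableEq M] [DecidableEq A] [DecidableEq K]
    (E : V → A → ℝ) (hE : ∀ v a, E v a ≠ 0 → |E v a| = 1)
    (jc : K → M) (ic : K → A) (l : K) (s : ℝ) (w : ECRWeights M V A K)
    (hw : w ∈ Set.extremePoints ℝ {w' : ECRWeights M V A K | memCl E jc ic l s w'})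
    (hpc : PairwiseCancellation E jc ic l w) :
    ∀ c : ECRCol M V A K, colVal w c = 0 ∨ colVal w c = |s| :=
  eq_zero_or_eq_of_mem_extremePoints_nonnegSolutions (fun _ _ ↦ abs_ecrRow_eq_one hE)
    (colVal_mem_extremePoints hw) hpc.cancelsInRow

/-- Every extreme point of `C^l` (the general-`m` cone over a network polytope) that
satisfies the pairwise-cancellation property has all of its components in `{0, 1}`: the
aggregation weights of all constraints used in an EC&R assignment obtained through pairwise
cancellation are equal to `1`. -/
theorem extremePoint_pairwiseCancellation_zero_one
    {M V A K : Type} [Fintype M] [Fintype V] [Fintype A] [Fintype K]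
    [DecidableEq M] [DecidableEq V] [DecidableEq A] [DecidableEq K]
    (t h : A → V) (hloop : ∀ a, t a ≠ h a)
    (E : V → A → ℝ)
    (hE : ∀ v a, E v a = (if t a = v then (1 : ℝ) else 0) - (if h a = v then 1 else 0))
    (jc : K → M) (ic : K → A) (l : K) (s : ℝ) (hs : s = 1 ∨ s = -1)
    (w : ECRWeights M V A K)
    (hw : w ∈ Set.extremePoints ℝ {w' : ECRWeights M V A K | memCl E jc ic l s w'})
    (hpc : PairwiseCancellation E jc ic l w) :
    ∀ c : ECRCol M V A K, colVal w c = 0 ∨ colVal w c = 1 := by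
  have habs : |s| = 1 := by rcases hs with rfl | rfl <;> simp
  have hE_abs (v : V) (a : A) : E v a ≠ 0 → |E v a| = 1 := by
    rw [hE]
    split_ifs <;> simp
  exact habs ▸ extremePoint_pairwiseCancellation_zero_one_general E hE_abs jc ic l s w hw hpc
end

section
/- Let π̄ be an extreme point of C^l (the general-m cone over a network polytope) satisfying the pairwise-cancellation property, and define the support sets Ĩ_j = {v ∈ V : γ_j⁺(v) > 0 or γ_j⁻(v) > 0}, Ĩ = {v ∈ V : θ⁺(v) > 0 or θ⁻(v) > 0}, and J̃ = {a ∈ A : λ(a) > 0 or μ(a) > 0}. Then: (i) the base arc i' has at most one endpoint in Ĩ ∪ Ĩ_{j'}, and if i' ∈ J̃ then i' has no endpoint in Ĩ ∪ Ĩ_{j'} (the base arc cannot simultaneously be a connection arc and be incident to a used node); (ii) for every j ∈ M, every arc a ∈ J̃ has at most one endpoint in Ĩ ∪ Ĩ_j; (iii) for every j ∈ M, every node v ∈ Ĩ ∩ Ĩ_j is adjacent to no other node of Ĩ ∩ Ĩ_j and is incident to no arc of J̃, and if j = j' then moreover v is not incident to the arc i'. -/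
/-!
Forgetting signs, every component of a weight vector belongs to one multiplier
`γ_j(v) = γ_j⁺(v) - γ_j⁻(v)`, `η_j(a) - ρ_j(a)`, `θ(v)`, `λ(a) - μ(a)` or `β(k)`. Pairwise
cancellation therefore lets at most two distinct multipliers be active in a row, and at most one in
the base row. In row `(a, j)` an endpoint of `a` lying in `Ĩ` or in `Ĩ_j` activates `θ(v)` or
`γ_j(v)`, an endpoint in both activates the two of them, and `a ∈ J̃` activates `λ(a) - μ(a)`. Each
configuration excluded by the theorem would activate three multipliers in one row, or two in the
base row.
-/

/-- The multipliers of the aggregation, i.e. the components of a weight vector up to sign: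
`γ j v` stands for `γ_j⁺(v)` and `γ_j⁻(v)`, `η j a` for `η_j(a)` and `ρ_j(a)`, `θ v` for `θ⁺(v)` and
`θ⁻(v)`, `lam a` for `λ(a)` and `μ(a)`, and `β k` for `β⁺(k)` and `β⁻(k)`. -/
inductive ECRMultiplier (M V A K : Type) : Type
  | γ (j : M) (v : V)
  | η (j : M) (a : A)
  | θ (v : V)
  | lam (a : A)
  | β (k : K)

/-- The multiplier to which a column contributes, the sign being forgotten. -/
def ECRCol.multiplier {M V A K : Type} : ECRCol M V A K → ECRMultiplier M V A K :=
  Sum.elim (fun jv => .γ jv.1 jv.2)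
    (Sum.elim (fun jv => .γ jv.1 jv.2)
      (Sum.elim (fun ja => .η ja.1 ja.2)
        (Sum.elim (fun ja => .η ja.1 ja.2)
          (Sum.elim .θ (Sum.elim .θ (Sum.elim .lam (Sum.elim .lam (Sum.elim .β .β))))))))

namespace ECRWeights

variable {M V A K : Type}

/-- The node support `Ĩ_j` of the multipliers `γ_j`. -/
def gammaSupport (w : ECRWeights M V A K) (j : M) : Set V := {v | 0 < γp w j v ∨ 0 < γm w j v}

/-- The node support `Ĩ` of the multipliers `θ`, which are shared by all `j`. -/
def thetaSupport (w : ECRWeights M V A K) : Set V := {v | 0 < θp w v ∨ 0 < θm w v}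

/-- The multipliers having a positive component in `w` that covers the row `r`. -/
def activeMultipliers (E : V → A → ℝ) (jc : K → M) (ic : K → A) (w : ECRWeights M V A K)
    (r : A × M) : Set (ECRMultiplier M V A K) :=
  ECRCol.multiplier '' {c | 0 < colVal w c ∧ covers E jc ic c r}

section activeMultipliers

variable {E : V → A → ℝ} {jc : K → M} {ic : K → A} {w : ECRWeights M V A K} {a : A} {j : M} {v : V}

theorem gamma_mem_activeMultipliers (hv : v ∈ w.gammaSupport j) (hva : E v a ≠ 0) :
    .γ j v ∈ w.activeMultipliers E jc ic (a, j) := by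
  rcases hv with hpos | hpos
  · exact ⟨.inl (j, v), ⟨hpos, rfl, hva⟩, rfl⟩
  · exact ⟨.inr (.inl (j, v)), ⟨hpos, rfl, hva⟩, rfl⟩

theorem theta_mem_activeMultipliers (hv : v ∈ w.thetaSupport) (hva : E v a ≠ 0) :
    .θ v ∈ w.activeMultipliers E jc ic (a, j) := by
  rcases hv with hpos | hpos
  · exact ⟨.inr (.inr (.inr (.inr (.inl v)))), ⟨hpos, hva⟩, rfl⟩
  · exact ⟨.inr (.inr (.inr (.inr (.inr (.inl v))))), ⟨hpos, hva⟩, rfl⟩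

theorem lam_mem_activeMultipliers (ha : a ∈ w.connectionArcs) :
    .lam a ∈ w.activeMultipliers E jc ic (a, j) := by
  rcases ha with hpos | hpos
  · exact ⟨.inr (.inr (.inr (.inr (.inr (.inr (.inl a)))))), ⟨hpos, rfl⟩, rfl⟩
  · exact ⟨.inr (.inr (.inr (.inr (.inr (.inr (.inr (.inl a))))))), ⟨hpos, rfl⟩, rfl⟩

theorem theta_or_gamma_mem_activeMultipliers (hv : v ∈ w.thetaSupport ∪ w.gammaSupport j)
    (hva : E v a ≠ 0) :
    .θ v ∈ w.activeMultipliers E jc ic (a, j) ∨ .γ j v ∈ w.activeMultipliers E jc ic (a, j) :=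
  hv.imp (theta_mem_activeMultipliers · hva) (gamma_mem_activeMultipliers · hva)

end activeMultipliers

end ECRWeights

namespace PairwiseCancellation

open ECRWeights

variable {M V A K : Type} [Finite M] [Finite V] [Finite A] [Finite K]
  {E : V → A → ℝ} {jc : K → M} {ic : K → A} {l : K} {w : ECRWeights M V A K}
  {a : A} {j : M} {v v' : V}

theorem activeMultipliers_base_subsingleton (hpc : PairwiseCancellation E jc ic l w) :
    (w.activeMultipliers E jc ic (ic l, jc l)).Subsingleton :=
  (Set.ncard_le_one_iff_subsingleton.mp hpc.2).image _

theorem eq_or_eq_or_eq_of_mem_activeMultipliers (hpc : PairwiseCancellation E jc ic l w)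
    {r : A × M} {x y z : ECRMultiplier M V A K} (hx : x ∈ w.activeMultipliers E jc ic r)
    (hy : y ∈ w.activeMultipliers E jc ic r) (hz : z ∈ w.activeMultipliers E jc ic r) :
    x = y ∨ x = z ∨ y = z := by
  by_contra! hne
  have hfin : (w.activeMultipliers E jc ic r).Finite := (Set.toFinite _).image _
  have hcard : (w.activeMultipliers E jc ic r).ncard ≤ 2 :=
    (Set.ncard_image_le (Set.toFinite _)).trans (hpc.1 r)
  exact hcard.not_gt ((Set.two_lt_ncard_iff hfin).mpr ⟨x, y, z, hx, hy, hz, hne⟩)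

theorem eq_of_mem_nodeSupport_base (hpc : PairwiseCancellation E jc ic l w)
    (hv : v ∈ w.thetaSupport ∪ w.gammaSupport (jc l)) (hvl : E v (ic l) ≠ 0)
    (hv' : v' ∈ w.thetaSupport ∪ w.gammaSupport (jc l)) (hvl' : E v' (ic l) ≠ 0) : v = v' := by
  rcases theta_or_gamma_mem_activeMultipliers hv hvl with hx | hx <;>
    rcases theta_or_gamma_mem_activeMultipliers hv' hvl' with hy | hy <;>
    simpa using hpc.activeMultipliers_base_subsingleton hx hy

theorem base_notMem_connectionArcs (hpc : PairwiseCancellation E jc ic l w)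
    (hv : v ∈ w.thetaSupport ∪ w.gammaSupport (jc l)) (hvl : E v (ic l) ≠ 0) :
    ic l ∉ w.connectionArcs := by
  intro hl
  rcases theta_or_gamma_mem_activeMultipliers hv hvl with hx | hx <;>
    simpa using hpc.activeMultipliers_base_subsingleton hx (lam_mem_activeMultipliers hl)

theorem eq_of_mem_connectionArcs (hpc : PairwiseCancellation E jc ic l w)
    (ha : a ∈ w.connectionArcs)
    (hv : v ∈ w.thetaSupport ∪ w.gammaSupport j) (hva : E v a ≠ 0)
    (hv' : v' ∈ w.thetaSupport ∪ w.gammaSupport j) (hva' : E v' a ≠ 0) : v = v' := by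
  rcases theta_or_gamma_mem_activeMultipliers hv hva with hx | hx <;>
    rcases theta_or_gamma_mem_activeMultipliers hv' hva' with hy | hy <;>
    simpa using hpc.eq_or_eq_or_eq_of_mem_activeMultipliers hx hy (lam_mem_activeMultipliers ha)

theorem eq_of_mem_theta_inter_gamma (hpc : PairwiseCancellation E jc ic l w)
    (hv : v ∈ w.thetaSupport ∩ w.gammaSupport j) (hva : E v a ≠ 0)
    (hv' : v' ∈ w.thetaSupport ∪ w.gammaSupport j) (hva' : E v' a ≠ 0) : v = v' := by
  rcases theta_or_gamma_mem_activeMultipliers hv' hva' with hz | hz <;>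
    simpa using hpc.eq_or_eq_or_eq_of_mem_activeMultipliers
      (theta_mem_activeMultipliers hv.1 hva) (gamma_mem_activeMultipliers hv.2 hva) hz

theorem notMem_connectionArcs_of_mem_theta_inter_gamma (hpc : PairwiseCancellation E jc ic l w)
    (hv : v ∈ w.thetaSupport ∩ w.gammaSupport j) (hva : E v a ≠ 0) : a ∉ w.connectionArcs := by
  intro ha
  simpa using hpc.eq_or_eq_or_eq_of_mem_activeMultipliers
    (theta_mem_activeMultipliers hv.1 hva) (gamma_mem_activeMultipliers hv.2 hva)
    (lam_mem_activeMultipliers ha)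

theorem coeff_base_eq_zero_of_mem_theta_inter_gamma (hpc : PairwiseCancellation E jc ic l w)
    (hv : v ∈ w.thetaSupport ∩ w.gammaSupport (jc l)) : E v (ic l) = 0 := by
  by_contra hvl
  simpa using hpc.activeMultipliers_base_subsingleton
    (theta_mem_activeMultipliers hv.1 hvl) (gamma_mem_activeMultipliers hv.2 hvl)

end PairwiseCancellation

theorem ite_sub_ite_ne_zero_of_ne {V R : Type*} [DecidableEq V] [Ring R] [Nontrivial R]
    {x y v : V} (hxy : x ≠ y) (hv : x = v ∨ y = v) :
    (if x = v then (1 : R) else 0) - (if y = v then 1 else 0) ≠ 0 := by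
  rcases hv with rfl | rfl
  · simp [hxy.symm]
  · simp [hxy]

theorem extremePoint_pairwiseCancellation_support_structure_general
    {M V A K : Type} [Finite M] [Finite V] [Finite A] [Finite K]
    (t h : A → V) (hloop : ∀ a, t a ≠ h a)
    (E : V → A → ℝ) (hE : ∀ v a, t a = v ∨ h a = v → E v a ≠ 0)
    (jc : K → M) (ic : K → A) (l : K) (w : ECRWeights M V A K)
    (hpc : PairwiseCancellation E jc ic l w) :
    (¬(t (ic l) ∈ w.thetaSupport ∪ w.gammaSupport (jc l) ∧
        h (ic l) ∈ w.thetaSupport ∪ w.gammaSupport (jc l)) ∧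
      (ic l ∈ w.connectionArcs →
        t (ic l) ∉ w.thetaSupport ∪ w.gammaSupport (jc l) ∧
        h (ic l) ∉ w.thetaSupport ∪ w.gammaSupport (jc l))) ∧
    (∀ j : M, ∀ a ∈ w.connectionArcs,
      ¬(t a ∈ w.thetaSupport ∪ w.gammaSupport j ∧ h a ∈ w.thetaSupport ∪ w.gammaSupport j)) ∧
    (∀ j : M, ∀ v ∈ w.thetaSupport ∩ w.gammaSupport j,
      (∀ v' ∈ w.thetaSupport ∩ w.gammaSupport j, v' ≠ v →
        ∀ a, ¬((t a = v ∨ h a = v) ∧ (t a = v' ∨ h a = v'))) ∧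
      (∀ a ∈ w.connectionArcs, ¬(t a = v ∨ h a = v)) ∧
      (j = jc l → ¬(t (ic l) = v ∨ h (ic l) = v))) := by
  have htail (a : A) : E (t a) a ≠ 0 := hE _ a (.inl rfl)
  have hhead (a : A) : E (h a) a ≠ 0 := hE _ a (.inr rfl)
  refine ⟨⟨?base, ?base_connection⟩, ?connection,
    fun j v hv ↦ ⟨?overlap, ?overlap_connection, ?overlap_base⟩⟩
  case base =>
    exact fun ⟨ht, hh⟩ ↦ hloop _ (hpc.eq_of_mem_nodeSupport_base ht (htail _) hh (hhead _))
  case base_connection =>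
    exact fun hl ↦ ⟨fun ht ↦ hpc.base_notMem_connectionArcs ht (htail _) hl,
      fun hh ↦ hpc.base_notMem_connectionArcs hh (hhead _) hl⟩
  case connection =>
    exact fun j a ha ⟨ht, hh⟩ ↦
      hloop a (hpc.eq_of_mem_connectionArcs ha ht (htail a) hh (hhead a))
  case overlap =>
    exact fun v' hv' hne a ⟨hva, hva'⟩ ↦
      hne.symm (hpc.eq_of_mem_theta_inter_gamma hv (hE v a hva) (.inl hv'.1) (hE v' a hva'))
  case overlap_connection =>
    exact fun a ha hva ↦ hpc.notMem_connectionArcs_of_mem_theta_inter_gamma hv (hE v a hva) ha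
  case overlap_base =>
    rintro rfl hvl
    exact hE v _ hvl (hpc.coeff_base_eq_zero_of_mem_theta_inter_gamma hv)

open ECRWeights in
/-- At an extreme point of `C^l` (the general-`m` cone over a network polytope) satisfying
the pairwise-cancellation property, with support sets
`Ĩ_j = {v : γ_j⁺ v > 0 ∨ γ_j⁻ v > 0}`, `Ĩ = {v : θ⁺ v > 0 ∨ θ⁻ v > 0}` and
`J̃ = {a : λ a > 0 ∨ μ a > 0}`:
(i) the base arc `i' = ic l` has at most one endpoint in `Ĩ ∪ Ĩ_{j'}`, and if `i' ∈ J̃`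
then `i'` has no endpoint in `Ĩ ∪ Ĩ_{j'}`;
(ii) for every `j`, every arc of `J̃` has at most one endpoint in `Ĩ ∪ Ĩ_j`;
(iii) for every `j`, every node of `Ĩ ∩ Ĩ_j` is adjacent to no other node of `Ĩ ∩ Ĩ_j` and
is incident to no arc of `J̃`, and if `j = j'` then moreover it is not incident to `i'`. -/
theorem extremePoint_pairwiseCancellation_support_structure
    {M V A K : Type} [Fintype M] [Fintype V] [Fintype A] [Fintype K]
    [DecidableEq M] [DecidableEq V] [DecidableEq A] [DecidableEq K]
    (t h : A → V) (hloop : ∀ a, t a ≠ h a)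
    (E : V → A → ℝ)
    (hE : ∀ v a, E v a = (if t a = v then (1 : ℝ) else 0) - (if h a = v then 1 else 0))
    (jc : K → M) (ic : K → A) (l : K) (s : ℝ) (hs : s = 1 ∨ s = -1)
    (w : ECRWeights M V A K)
    (hw : w ∈ Set.extremePoints ℝ {w' : ECRWeights M V A K | memCl E jc ic l s w'})
    (hpc : PairwiseCancellation E jc ic l w)
    (Ij : M → Set V) (hIj : ∀ j, Ij j = {v | 0 < γp w j v ∨ 0 < γm w j v})
    (I : Set V) (hI : I = {v | 0 < θp w v ∨ 0 < θm w v})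
    (J : Set A) (hJ : J = {a | 0 < lam w a ∨ 0 < mu w a}) :
    (¬(t (ic l) ∈ I ∪ Ij (jc l) ∧ h (ic l) ∈ I ∪ Ij (jc l)) ∧
      (ic l ∈ J → t (ic l) ∉ I ∪ Ij (jc l) ∧ h (ic l) ∉ I ∪ Ij (jc l))) ∧
    (∀ j : M, ∀ a ∈ J, ¬(t a ∈ I ∪ Ij j ∧ h a ∈ I ∪ Ij j)) ∧
    (∀ j : M, ∀ v ∈ I ∩ Ij j,
      (∀ v' ∈ I ∩ Ij j, v' ≠ v →
        ∀ a, ¬((t a = v ∨ h a = v) ∧ (t a = v' ∨ h a = v'))) ∧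
      (∀ a ∈ J, ¬(t a = v ∨ h a = v)) ∧
      (j = jc l → ¬(t (ic l) = v ∨ h (ic l) = v))) := by
  obtain rfl := funext hIj
  subst hI hJ
  exact extremePoint_pairwiseCancellation_support_structure_general t h hloop E
    (fun v a hva ↦ hE v a ▸ ite_sub_ite_ne_zero_of_ne (hloop a) hva) jc ic l w hpc
end
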